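/- (Pumping Counters Lemma) Let M be a d-dimensional affine continuous VASS all of whose transition matrices are non-negative self-loop matrices, and let ρ: p(u) →^π p(v) be a run. Let S be a set of counters such that every x ∈ S is pumped in ρ by some transition t with supp_t^p(x) ∩ supp(v) ≠ ∅. Then for every rational K > 0 there exists n ≥ 1 such that, letting π' be the concatenation of (1/2)·π followed by n copies of (1/(2n))·π, there is a run p(u) →^{π'} p(w) with w ≥ v componentwise and w(x) > K for every x ∈ S. -/

import Mathlib

namespace ACVASS

/-- Vectors of rationals indexed by counters. -/
abbrev Vec (d : ℕ) := Fin d → ℚ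

/-- A vector is componentwise non-negative (i.e. lies in ℚ₊^d). -/
def NonNeg {d : ℕ} (u : Vec d) : Prop := ∀ i, 0 ≤ u i

/-- Square integer matrices of dimension d. -/
abbrev Mat (d : ℕ) := Matrix (Fin d) (Fin d) ℤ

/-- Transitions of a d-dimensional affine continuous VASS. -/
abbrev Trans (Q : Type) (d : ℕ) := Q × Mat d × (Fin d → ℤ) × Q

def Trans.src {Q : Type} {d : ℕ} (t : Trans Q d) : Q := t.1
def Trans.mat {Q : Type} {d : ℕ} (t : Trans Q d) : Mat d := t.2.1
def Trans.upd {Q : Type} {d : ℕ} (t : Trans Q d) : Fin d → ℤ := t.2.2.1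
def Trans.tgt {Q : Type} {d : ℕ} (t : Trans Q d) : Q := t.2.2.2

/-- Cast an integer matrix to a rational matrix. -/
def castMat {d : ℕ} (A : Mat d) : Matrix (Fin d) (Fin d) ℚ := A.map (Int.cast)

/-- Cast an integer vector to a rational vector. -/
def castVec {d : ℕ} (b : Fin d → ℤ) : Vec d := fun i => (b i : ℚ)

/-- A d-dimensional affine continuous VASS: a finite set of transitions. -/
structure ACV (Q : Type) (d : ℕ) where
  T : Finset (Trans Q d)

/-- Configurations: a state together with a vector of counter values. -/
abbrev Conf (Q : Type) (d : ℕ) := Q × Vec d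

/-- A step `p(u) →^{αt} q(v)`: `t` is a transition of `M`, `α ∈ (0,1]`, both
configurations are non-negative and `v = A·u + α·b`. -/
def Step {Q : Type} {d : ℕ} (M : ACV Q d) (C : Conf Q d) (α : ℚ) (t : Trans Q d)
    (C' : Conf Q d) : Prop :=
  t ∈ M.T ∧ 0 < α ∧ α ≤ 1 ∧ C.1 = t.src ∧ C'.1 = t.tgt ∧
    NonNeg C.2 ∧ NonNeg C'.2 ∧
    C'.2 = (castMat t.mat).mulVec C.2 + α • castVec t.upd

/-- Firing sequences. -/
abbrev FSeq (Q : Type) (d : ℕ) := List (ℚ × Trans Q d)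

/-- `Run M C π C'` : `C →^π C'`, i.e. the steps of `π` can be realized in order. -/
inductive Run {Q : Type} {d : ℕ} (M : ACV Q d) : Conf Q d → FSeq Q d → Conf Q d → Prop
  | nil (C : Conf Q d) (h : NonNeg C.2) : Run M C [] C
  | cons {C C' C'' : Conf Q d} {α : ℚ} {t : Trans Q d} {π : FSeq Q d} :
      Step M C α t C' → Run M C' π C'' → Run M C ((α, t) :: π) C''

/-- `C →* C'`. -/
def Reach {Q : Type} {d : ℕ} (M : ACV Q d) (C C' : Conf Q d) : Prop := ∃ π, Run M C π C'

/-- `p(u)` covers `q(v)`: `p(u) →* q(v')` for some `v' ≥ v`. -/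
def Covers {Q : Type} {d : ℕ} (M : ACV Q d) (C C' : Conf Q d) : Prop :=
  ∃ v', C'.2 ≤ v' ∧ Reach M C (C'.1, v')

/-- Support of a vector. -/
def supp {d : ℕ} (u : Vec d) : Set (Fin d) := {i | u i ≠ 0}

/-- `supp_t^-(x) = {y : A(x,y) > 0}`. -/
def suppMinus {Q : Type} {d : ℕ} (t : Trans Q d) (x : Fin d) : Set (Fin d) :=
  {y | 0 < t.mat x y}

/-- `supp_t^+ = {x : b(x) > 0}`. -/
def suppPlus {Q : Type} {d : ℕ} (t : Trans Q d) : Set (Fin d) := {x | 0 < t.upd x}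

/-- `supp_t^p(x)`: counters that can pump `x` via transition `t`. -/
def suppPump {Q : Type} {d : ℕ} (t : Trans Q d) (x : Fin d) : Set (Fin d) :=
  {y | (y ≠ x ∧ 0 < t.mat x y) ∨ (y = x ∧ 1 < t.mat x y)}

/-- The set of transitions occurring in a firing sequence. -/
def seqSupp {Q : Type} {d : ℕ} (π : FSeq Q d) : Set (Trans Q d) := {t | ∃ α, (α, t) ∈ π}

/-- Non-negative matrix. -/
def NonNegMat {d : ℕ} (A : Mat d) : Prop := ∀ i j, 0 ≤ A i j

/-- Non-negative self-loop matrix: non-negative with no zero diagonal entry. -/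
def SelfLoopMat {d : ℕ} (A : Mat d) : Prop := NonNegMat A ∧ ∀ i, A i i ≠ 0

/-- All transition matrices of `M` are non-negative. -/
def NonNegVASS {Q : Type} {d : ℕ} (M : ACV Q d) : Prop := ∀ t ∈ M.T, NonNegMat t.mat

/-- All transition matrices of `M` are non-negative self-loop matrices. -/
def SelfLoopVASS {Q : Type} {d : ℕ} (M : ACV Q d) : Prop := ∀ t ∈ M.T, SelfLoopMat t.mat

/-- `β·π`: scale all fractions of a firing sequence by `β`. -/
def scaleSeq {Q : Type} {d : ℕ} (β : ℚ) (π : FSeq Q d) : FSeq Q d :=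
  π.map (fun p => (β * p.1, p.2))

/-- Counter `x` is pumped by transition `t` in the run obtained by firing `π` from `C`:
some step of the run uses `t` from a source configuration `C₁` with a counter
`y ∈ supp_t^p(x)` of positive value. -/
def PumpedBy {Q : Type} {d : ℕ} (M : ACV Q d) (C : Conf Q d) (π : FSeq Q d)
    (t : Trans Q d) (x : Fin d) : Prop :=
  ∃ (π₁ : FSeq Q d) (α : ℚ) (π₂ : FSeq Q d) (C₁ C₂ : Conf Q d),
    π = π₁ ++ (α, t) :: π₂ ∧ Run M C π₁ C₁ ∧ Step M C₁ α t C₂ ∧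
    ∃ y ∈ suppPump t x, 0 < C₁.2 y

/-- Counter `x` is pumped in the run obtained by firing `π` from `C`. -/
def Pumps {Q : Type} {d : ℕ} (M : ACV Q d) (C : Conf Q d) (π : FSeq Q d) (x : Fin d) : Prop :=
  ∃ t, PumpedBy M C π t x

/-- Edges of the support abstraction `SU_M`. -/
def SuppEdge {Q : Type} {d : ℕ} (M : ACV Q d) (v : Q × Set (Fin d)) (t : Trans Q d)
    (v' : Q × Set (Fin d)) : Prop :=
  t ∈ M.T ∧ v.1 = t.src ∧ v'.1 = t.tgt ∧
    ∀ x : Fin d,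
      (t.upd x < 0 → (suppMinus t x ∩ v.2).Nonempty) ∧
      (0 < t.upd x → x ∈ v'.2) ∧
      (x ∈ v'.2 → 0 < t.upd x ∨ (suppMinus t x ∩ v.2).Nonempty)

/-- Directed-path reachability in the support abstraction `SU_M`. -/
def SuppReach {Q : Type} {d : ℕ} (M : ACV Q d) :
    Q × Set (Fin d) → Q × Set (Fin d) → Prop :=
  Relation.ReflTransGen (fun a b => ∃ t, SuppEdge M a t b)

/-- A step of the continuous VASS `M_X` (only the counters in `X` are tracked). -/
def StepX {Q : Type} {d : ℕ} (M : ACV Q d) (X : Set (Fin d)) (p : Q) (u : Vec d) (α : ℚ)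
    (t : Trans Q d) (q : Q) (v : Vec d) : Prop :=
  t ∈ M.T ∧ 0 < α ∧ α ≤ 1 ∧ p = t.src ∧ q = t.tgt ∧
    (∀ i ∈ X, 0 ≤ u i) ∧ (∀ i ∈ X, 0 ≤ v i) ∧ (∀ i ∈ X, v i = u i + α * castVec t.upd i)

/-- A run of the continuous VASS `M_X`; vectors matter only on the counters of `X`. -/
inductive RunX {Q : Type} {d : ℕ} (M : ACV Q d) (X : Set (Fin d)) :
    Q → Vec d → FSeq Q d → Q → Vec d → Prop
  | nil (p : Q) (u v : Vec d) (h : ∀ i ∈ X, 0 ≤ u i ∧ u i = v i) : RunX M X p u [] p v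
  | cons {p r q : Q} {u w v : Vec d} {α : ℚ} {t : Trans Q d} {π : FSeq Q d} :
      StepX M X p u α t r w → RunX M X r w π q v → RunX M X p u ((α, t) :: π) q v

/-- One edge of the graph `G_M` using only transitions from `S`. -/
def GStep {Q : Type} {d : ℕ} (S : Set (Trans Q d)) (a b : Q) : Prop :=
  ∃ t ∈ S, t.src = a ∧ t.tgt = b

/-- A (possibly empty) path in the graph `G_M` using only transitions from `S`. -/
def GPath {Q : Type} {d : ℕ} (S : Set (Trans Q d)) : Q → Q → Prop :=
  Relation.ReflTransGen (GStep S)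

/-- `Rep-Half(π)`: the i-th fraction of `π` is divided by `2^i`. -/
def repHalf {Q : Type} {d : ℕ} : FSeq Q d → FSeq Q d
  | [] => []
  | (α, t) :: rest => (α / 2, t) :: scaleSeq (1 / 2) (repHalf rest)

/-- Descending partial product `A_{ℓ-1} ⋯ A_j` (0-indexed); for `j = ℓ` this is
the identity matrix. -/
def descProd {d ℓ : ℕ} (A : Fin ℓ → Matrix (Fin d) (Fin d) ℚ) (j : ℕ) :
    Matrix (Fin d) (Fin d) ℚ :=
  (((List.finRange ℓ).drop j).reverse.map A).prod

/-- The permutation matrix `P_σ` with `P_σ(i,j) = 1` iff `σ(i) = j`. -/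
def permMat {n : ℕ} (σ : Equiv.Perm (Fin n)) : Matrix (Fin n) (Fin n) ℤ :=
  Matrix.of fun i j => if σ i = j then 1 else 0

/-- A matrix is a permutation matrix. -/
def IsPermMat {d : ℕ} (A : Mat d) : Prop := ∃ σ : Equiv.Perm (Fin d), A = permMat σ

/-- The n×n block-diagonal matrix with blocks `I_o`, `A`, `I_{n-o-k}`:
`A` occupies rows/columns `o,…,o+k-1` and the rest is identity. -/
def applyBlock {k : ℕ} (A : Matrix (Fin k) (Fin k) ℤ) (o n : ℕ) :
    Matrix (Fin n) (Fin n) ℤ :=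
  Matrix.of fun r c =>
    if h : o ≤ r.val ∧ r.val < o + k ∧ o ≤ c.val ∧ c.val < o + k then
      A ⟨r.val - o, by omega⟩ ⟨c.val - o, by omega⟩
    else if r.val = c.val then 1 else 0

/-- Transitions of a continuous VASS (with identity matrices left implicit). -/
abbrev CTrans (Q : Type) (d : ℕ) := Q × (Fin d → ℤ) × Q

/-- Zero-tests. -/
abbrev ZTest (Q : Type) (d : ℕ) := Q × Fin d × Q

/-- A d-dimensional continuous VASS with zero-tests. -/
structure CVZ (Q : Type) (d : ℕ) where
  T : Finset (CTrans Q d)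
  T0 : Finset (ZTest Q d)

/-- A transition step of a continuous VASS with zero-tests. -/
def CStep {Q : Type} {d : ℕ} (M : CVZ Q d) (C : Conf Q d) (α : ℚ) (t : CTrans Q d)
    (C' : Conf Q d) : Prop :=
  t ∈ M.T ∧ 0 < α ∧ α ≤ 1 ∧ C.1 = t.1 ∧ C'.1 = t.2.2 ∧
    NonNeg C.2 ∧ NonNeg C'.2 ∧ C'.2 = C.2 + α • castVec t.2.1

/-- A zero-test step of a continuous VASS with zero-tests. -/
def ZStep {Q : Type} {d : ℕ} (M : CVZ Q d) (C : Conf Q d) (t : ZTest Q d)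
    (C' : Conf Q d) : Prop :=
  t ∈ M.T0 ∧ C.1 = t.1 ∧ C'.1 = t.2.2 ∧ NonNeg C.2 ∧ C.2 t.2.1 = 0 ∧ C'.2 = C.2

/-- A d-dimensional continuous VASS. -/
structure CV (Q : Type) (d : ℕ) where
  T : Finset (CTrans Q d)

/-- A step of a continuous VASS. -/
def CVStep {Q : Type} {d : ℕ} (M : CV Q d) (C : Conf Q d) (α : ℚ) (t : CTrans Q d)
    (C' : Conf Q d) : Prop :=
  t ∈ M.T ∧ 0 < α ∧ α ≤ 1 ∧ C.1 = t.1 ∧ C'.1 = t.2.2 ∧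
    NonNeg C.2 ∧ NonNeg C'.2 ∧ C'.2 = C.2 + α • castVec t.2.1

/-- Reachability (`→*`) in a continuous VASS. -/
def CVReach {Q : Type} {d : ℕ} (M : CV Q d) : Conf Q d → Conf Q d → Prop :=
  Relation.ReflTransGen (fun C C' => ∃ α t, CVStep M C α t C')


theorem aux_mulVec {d : ℕ} (A : Mat d) (hA : SelfLoopMat A) (z : Vec d) (hz : NonNeg z) :
    z ≤ (castMat A).mulVec z ∧
    ∀ x y, ((y ≠ x ∧ 0 < A x y) ∨ (y = x ∧ 1 < A x y)) →
      z x + z y ≤ (castMat A).mulVec z x := by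
  have hnn : ∀ x i, 0 ≤ castMat A x i * z i := fun x i =>
    mul_nonneg (by simpa [castMat] using hA.1 x i) (hz i)
  have hdiag : ∀ x, (1 : ℚ) ≤ castMat A x x := fun x => by
    have h1 := hA.1 x x
    have h2 := hA.2 x
    have h3 : (1 : ℤ) ≤ A x x := by omega
    simpa [castMat] using (by exact_mod_cast h3 : (1 : ℚ) ≤ (A x x : ℚ))
  have hx : ∀ x, z x ≤ castMat A x x * z x := fun x => le_mul_of_one_le_left (hz x) (hdiag x)
  constructor
  · intro x
    refine (hx x).trans ?_
    exact Finset.single_le_sum (f := fun i => castMat A x i * z i)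
      (fun i _ => hnn x i) (Finset.mem_univ x)
  · rintro x y (⟨hne, h⟩ | ⟨rfl, h⟩)
    · have h1 : (1 : ℚ) ≤ castMat A x y := by
        have h3 : (1 : ℤ) ≤ A x y := by omega
        simpa [castMat] using (by exact_mod_cast h3 : (1 : ℚ) ≤ (A x y : ℚ))
      have h2 : z y ≤ castMat A x y * z y := le_mul_of_one_le_left (hz y) h1
      have h3 : ∑ i ∈ ({x, y} : Finset (Fin d)), castMat A x i * z i
          ≤ ∑ i, castMat A x i * z i :=
        Finset.sum_le_sum_of_subset_of_nonneg (Finset.subset_univ _) (fun i _ _ => hnn x i)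
      rw [Finset.sum_pair (Ne.symm hne)] at h3
      have h4 := hx x
      exact le_trans (by linarith) h3
    · have h1 : (2 : ℚ) ≤ castMat A y y := by
        have h3 : (2 : ℤ) ≤ A y y := by omega
        simpa [castMat] using (by exact_mod_cast h3 : (2 : ℚ) ≤ (A y y : ℚ))
      have h3 : castMat A y y * z y ≤ (castMat A).mulVec z y :=
        Finset.single_le_sum (f := fun i => castMat A y i * z i)
          (fun i _ => hnn y i) (Finset.mem_univ y)
      have h4 := mul_le_mul_of_nonneg_right h1 (hz y)
      linarith

theorem aux_scale {Q : Type} {d : ℕ} (M : ACV Q d) (hM : SelfLoopVASS M) (β : ℚ)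
    (hβ : 0 < β) (hβ1 : β ≤ 1) {C C' : Conf Q d} {π : FSeq Q d} (h : Run M C π C') :
    ∀ z : Vec d, NonNeg z → ∃ z' : Vec d,
      Run M (C.1, β • C.2 + z) (scaleSeq β π) (C'.1, β • C'.2 + z') ∧ z ≤ z' ∧
      ∀ t ∈ seqSupp π, ∀ x, ∀ y ∈ suppPump t x, z x + z y ≤ z' x := by
  have nn : ∀ a z : Vec d, NonNeg a → NonNeg z → NonNeg (β • a + z) := fun a z ha hz i => by
    simpa using add_nonneg (mul_nonneg hβ.le (ha i)) (hz i)
  induction h with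
  | nil C h =>
    intro z hz
    refine ⟨z, Run.nil _ (nn _ _ h hz), le_rfl, ?_⟩
    rintro t ⟨α, h⟩
    simp at h
  | @cons C C' C'' α t π hs hr ih =>
    intro z hz
    obtain ⟨ht, h0, h1, hsrc, htgt, hn, hn', he⟩ := hs
    obtain ⟨hle, hp⟩ := aux_mulVec t.mat (hM t ht) z hz
    set z1 := (castMat t.mat).mulVec z with hz1
    have hz1n : NonNeg z1 := fun i => (hz i).trans (hle i)
    obtain ⟨z', hrun, hle', hp'⟩ := ih z1 hz1n
    refine ⟨z', ?_, hle.trans hle', ?_⟩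
    · refine Run.cons (C' := (C'.1, β • C'.2 + z1)) ?_ hrun
      refine ⟨ht, mul_pos hβ h0, mul_le_one₀ hβ1 h0.le h1, hsrc, htgt, nn _ _ hn hz,
        nn _ _ hn' hz1n, ?_⟩
      simp only [he, Matrix.mulVec_add, Matrix.mulVec_smul, smul_add, smul_smul, ← hz1]
      abel
    · rintro s ⟨γ, hs⟩ x y hy
      rcases List.mem_cons.1 hs with h | h
      · obtain ⟨-, rfl⟩ := Prod.mk.inj h
        exact (hp x y hy).trans (hle' x)
      · exact (add_le_add (hle x) (hle y)).trans (hp' s ⟨γ, h⟩ x y hy)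

theorem aux_append {Q : Type} {d : ℕ} (M : ACV Q d) {C C' C'' : Conf Q d} {π π' : FSeq Q d}
    (h : Run M C π C') (h' : Run M C' π' C'') : Run M C (π ++ π') C'' := by
  induction h with
  | nil => exact h'
  | cons hs _ ih => exact Run.cons hs (ih h')

theorem aux_nonneg {Q : Type} {d : ℕ} (M : ACV Q d) {C C' : Conf Q d} {π : FSeq Q d}
    (h : Run M C π C') : NonNeg C.2 ∧ NonNeg C'.2 := by
  induction h with
  | nil _ h => exact ⟨h, h⟩
  | cons hs _ ih => exact ⟨hs.2.2.2.2.2.1, ih.2⟩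

theorem aux_iter {Q : Type} {d : ℕ} (M : ACV Q d) (hM : SelfLoopVASS M)
    (p : Q) (u v : Vec d) (π : FSeq Q d) (hrun : Run M (p, u) π (p, v)) (n : ℕ)
    (β : ℚ) (hβ : 0 < β) (hβ1 : β ≤ 1) (hn : (n : ℚ) * β = 1 / 2) :
    ∀ j : ℕ, j ≤ n → ∃ w : Vec d,
      Run M (p, u) (scaleSeq (1 / 2) π ++ (List.replicate j (scaleSeq β π)).flatten) (p, w) ∧
      (∀ i, ((n : ℚ) - j) * β * u i + ((n : ℚ) + j) * β * v i ≤ w i) ∧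
      ∀ t ∈ seqSupp π, ∀ x, ∀ y ∈ suppPump t x,
        ((n : ℚ) - j) * β * u x + j * (v y / 2) ≤ w x := by
  obtain ⟨hu, hv⟩ := aux_nonneg M hrun
  simp only at hu hv
  intro j
  induction j with
  | zero =>
    intro _
    obtain ⟨z', hr, hle, -⟩ := aux_scale M hM (1 / 2) (by norm_num) (by norm_num) hrun
      ((1 / 2 : ℚ) • u) (fun i => by simpa using hu i)
    refine ⟨(1 / 2 : ℚ) • v + z', ?_, ?_, ?_⟩
    · have e : (1 / 2 : ℚ) • u + (1 / 2 : ℚ) • u = u := by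
        rw [← add_smul]; norm_num
      simpa only [e, List.replicate_zero, List.flatten_nil, List.append_nil] using hr
    · intro i
      have := hle i
      simp only [Pi.smul_apply, smul_eq_mul, Pi.add_apply, Nat.cast_zero, sub_zero, add_zero,
        hn] at this ⊢
      linarith
    · intro t _ x y _
      have := hle x
      have hvx := hv x
      simp only [Pi.smul_apply, smul_eq_mul, Pi.add_apply, Nat.cast_zero, sub_zero, zero_mul,
        add_zero, hn] at this ⊢
      linarith
  | succ j ih =>
    intro hj
    obtain ⟨w, hr, hw, hp⟩ := ih (by omega)
    have hjn : (j : ℚ) + 1 ≤ n := by exact_mod_cast hj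
    have hj0 : (0 : ℚ) ≤ j := Nat.cast_nonneg j
    have hzy : ∀ i, v i / 2 ≤ w i - β * u i := fun i => by
      have h1 := hw i
      have h2 : 0 ≤ ((n : ℚ) - j - 1) * (β * u i) :=
        mul_nonneg (by linarith) (mul_nonneg hβ.le (hu i))
      have h3 : 0 ≤ (j : ℚ) * (β * v i) := mul_nonneg hj0 (mul_nonneg hβ.le (hv i))
      have h4 : (n : ℚ) * β * v i = 1 / 2 * v i := by rw [hn]
      linarith
    obtain ⟨z', hr', hle, hpz⟩ := aux_scale M hM β hβ hβ1 hrun (w - β • u) (fun i => by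
      have := hzy i
      have := hv i
      simp only [Pi.sub_apply, Pi.smul_apply, smul_eq_mul]
      linarith)
    simp only [add_sub_cancel] at hr'
    refine ⟨β • v + z', ?_, ?_, ?_⟩
    · have := aux_append M hr hr'
      rw [List.replicate_succ', List.flatten_append, ← List.append_assoc]
      simpa using this
    · intro i
      have h1 := hle i
      have h2 := hw i
      simp only [Pi.sub_apply, Pi.add_apply, Pi.smul_apply, smul_eq_mul] at h1 ⊢
      push_cast
      linarith
    · intro t ht x y hy
      have h1 := hpz t ht x y hy
      have h2 := hp t ht x y hy
      have h3 := hzy y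
      have h4 := mul_nonneg hβ.le (hv x)
      simp only [Pi.sub_apply, Pi.add_apply, Pi.smul_apply, smul_eq_mul] at h1 ⊢
      push_cast
      linarith

/-- Pumping Counters Lemma. -/
theorem pumping_counters
    {Q : Type} [Fintype Q] {d : ℕ} (M : ACV Q d) (hM : SelfLoopVASS M)
    (p : Q) (u v : Vec d) (π : FSeq Q d) (hrun : Run M (p, u) π (p, v))
    (S : Set (Fin d))
    (hS : ∀ x ∈ S, ∃ t : Trans Q d,
      PumpedBy M (p, u) π t x ∧ (suppPump t x ∩ supp v).Nonempty)
    (K : ℚ) (hK : 0 < K) :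
    ∃ n : ℕ, 1 ≤ n ∧ ∃ w : Vec d,
      Run M (p, u)
        (scaleSeq (1 / 2) π ++ (List.replicate n (scaleSeq (1 / (2 * (n : ℚ))) π)).flatten)
        (p, w) ∧
      v ≤ w ∧ ∀ x ∈ S, K < w x := by
  obtain ⟨hu, hv⟩ := aux_nonneg M hrun
  simp only at hu hv
  have hN : ∀ i, ∃ N : ℕ, 0 < v i → 2 * K < N * v i := fun i => by
    by_cases h : 0 < v i
    · obtain ⟨N, hN⟩ := exists_nat_gt (2 * K / v i)
      exact ⟨N, fun _ => (div_lt_iff₀ h).1 hN⟩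
    · exact ⟨0, fun h' => absurd h' h⟩
  choose N hN using hN
  set n : ℕ := ∑ i, N i + 1 with hn
  have hn1 : 1 ≤ n := by omega
  have hnq : (1 : ℚ) ≤ n := by exact_mod_cast hn1
  have hNn : ∀ i, N i ≤ n := fun i => by
    have := Finset.single_le_sum (f := N) (fun _ _ => Nat.zero_le _) (Finset.mem_univ i)
    omega
  obtain ⟨w, hr, hw, hp⟩ := aux_iter M hM p u v π hrun n (1 / (2 * (n : ℚ))) (by positivity)
    (by rw [div_le_one (by positivity)]; linarith) (by field_simp) n le_rfl
  refine ⟨n, hn1, w, hr, fun i => ?_, fun x hx => ?_⟩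
  · have h1 := hw i
    have h2 : ((n : ℚ) + n) * (1 / (2 * (n : ℚ))) = 1 := by field_simp; norm_num
    rw [h2] at h1
    simpa using h1
  · obtain ⟨t, ⟨π₁, α, π₂, C₁, C₂, he, -⟩, y, hy, hyv⟩ := hS x hx
    have hvy : 0 < v y := lt_of_le_of_ne (hv y) (Ne.symm hyv)
    have h1 := hp t ⟨α, by simp [he]⟩ x y hy
    have h2 := hN y hvy
    have h3 : (N y : ℚ) * v y ≤ n * v y :=
      mul_le_mul_of_nonneg_right (by exact_mod_cast hNn y) hvy.le
    simp only [sub_self, zero_mul, zero_add] at h1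
    linarith

end ACVASS
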